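/- For every η > 0 there exists N₀ such that for all odd N = 2k + 1 ≥ N₀ the following holds. Let A be any sampling algorithm on inputs in {0,1}^N that forms a masked string y ∈ {0,1,⋆}^N by independently replacing each coordinate x_i with ⋆ with probability N^(-1/5) (and keeping it with probability 1 - N^(-1/5)), and then outputs a (possibly randomized) bit depending only on y. Let X be uniformly distributed on the set of strings in {0,1}^N having exactly k or exactly k + 1 ones. Then Pr[ A(X) = Majority(X) ] ≤ 1/2 + η, where Majority(X) = 1 if X has at least k + 1 ones and 0 otherwise. -/

import Mathlib

/-- The number of ones in a boolean string. -/
def wt {N : ℕ} (x : Fin N → Bool) : ℕ := (Finset.univ.filter fun i => x i = true).card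

/-- The majority function: `1` iff more than half the bits are `1`
(for `N = 2k + 1`, iff at least `k + 1` bits are `1`). -/
def maj {N : ℕ} (x : Fin N → Bool) : Bool := decide (N < 2 * wt x)

/-- The masked string `y ∈ {0,1,⋆}^N` obtained from `x` by keeping exactly the
coordinates in `S` (a `⋆` is modelled as `none`). -/
def mask {N : ℕ} (x : Fin N → Bool) (S : Finset (Fin N)) : Fin N → Option Bool :=
  fun i => if i ∈ S then some (x i) else none

/-!
Condition on the set `S` of unmasked coordinates and write `M n = n.choose (n / 2)`. There are
`(#Sᶜ).choose (n - #B)` strings of weight `n` whose ones inside `S` form the set `B`. Passing from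
weight `k` to `k + 1`, grouping by `#B` and telescoping over the increasing half of the row of
binomial coefficients shows that the algorithm accepts, in expectation, at most `M #S * M #Sᶜ` more
strings of weight `k + 1` than of weight `k`. Hence its advantage over random guessing, given `S`,
is at most half of `M #S * M #Sᶜ / M N`. Since `M n` is of order `2 ^ n / √(n + 1)`, the square of
this ratio is at most `2 / (#S + 1) + 2 / (#Sᶜ + 1)`, whose mean over the random set `S` is at most
`2 / ((N + 1) q (1 - q))`; Cauchy–Schwarz turns this into a bound on the mean of the ratio itself.
-/

open Finset Filter Topology

section MiddleBinomial

theorem centralBinom_succ_eq_two_mul_choose (j : ℕ) :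
    (j + 1).centralBinom = 2 * (2 * j + 1).choose j := by
  rw [Nat.centralBinom_eq_two_mul_choose, Nat.mul_succ, Nat.choose_succ_succ,
    Nat.choose_symm_half, ← two_mul]

theorem centralBinom_sq_mul_le (j : ℕ) : j.centralBinom ^ 2 * (2 * j + 1) ≤ 16 ^ j := by
  induction j with
  | zero => simp
  | succ j ih =>
    refine Nat.le_of_mul_le_mul_left ?_ (pow_pos j.succ_pos 2)
    calc (j + 1) ^ 2 * ((j + 1).centralBinom ^ 2 * (2 * (j + 1) + 1))
        = ((j + 1) * (j + 1).centralBinom) ^ 2 * (2 * j + 3) := by ring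
      _ = 4 * ((2 * j + 1) * (2 * j + 3)) * (j.centralBinom ^ 2 * (2 * j + 1)) := by
          rw [Nat.succ_mul_centralBinom_succ]; ring
      _ ≤ 4 * (4 * (j + 1) ^ 2) * 16 ^ j := by
          gcongr 4 * ?_ * ?_
          nlinarith
      _ = (j + 1) ^ 2 * 16 ^ (j + 1) := by ring

theorem sixteen_pow_le_centralBinom_sq_mul {j : ℕ} (hj : 1 ≤ j) :
    16 ^ j ≤ j.centralBinom ^ 2 * (4 * j) := by
  induction j, hj using Nat.le_induction with
  | base => decide
  | succ j _ ih =>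
    refine Nat.le_of_mul_le_mul_left ?_ (pow_pos j.succ_pos 2)
    calc (j + 1) ^ 2 * 16 ^ (j + 1) = 16 * (j + 1) ^ 2 * 16 ^ j := by ring
      _ ≤ 16 * (j + 1) ^ 2 * (j.centralBinom ^ 2 * (4 * j)) := by gcongr
      _ = 16 * (j + 1) * j.centralBinom ^ 2 * (4 * j * (j + 1)) := by ring
      _ ≤ 16 * (j + 1) * j.centralBinom ^ 2 * (2 * j + 1) ^ 2 := by
          gcongr
          nlinarith
      _ = (2 * (2 * j + 1) * j.centralBinom) ^ 2 * (4 * (j + 1)) := by ring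
      _ = (j + 1) ^ 2 * ((j + 1).centralBinom ^ 2 * (4 * (j + 1))) := by
          rw [← Nat.succ_mul_centralBinom_succ]; ring

theorem choose_half_sq_mul_le (n : ℕ) : n.choose (n / 2) ^ 2 * (n + 1) ≤ 4 ^ n := by
  obtain ⟨j, rfl | rfl⟩ := n.even_or_odd'
  · rw [Nat.mul_div_cancel_left j two_pos, ← Nat.centralBinom_eq_two_mul_choose, pow_mul]
    exact centralBinom_sq_mul_le j
  · have hcentral := centralBinom_sq_mul_le (j + 1)
    rw [centralBinom_succ_eq_two_mul_choose] at hcentral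
    have hpow : 4 * 4 ^ (2 * j + 1) = 16 ^ (j + 1) := by
      rw [← pow_succ', show 2 * j + 1 + 1 = 2 * (j + 1) by ring, pow_mul]; norm_num
    rw [show (2 * j + 1) / 2 = j by lia]
    nlinarith

theorem four_pow_le_choose_half_sq_mul (n : ℕ) :
    4 ^ n ≤ n.choose (n / 2) ^ 2 * (2 * (n + 1)) := by
  obtain ⟨j, rfl | rfl⟩ := n.even_or_odd'
  · rcases j.eq_zero_or_pos with rfl | hj
    · simp
    · rw [Nat.mul_div_cancel_left j two_pos, ← Nat.centralBinom_eq_two_mul_choose, pow_mul]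
      exact (sixteen_pow_le_centralBinom_sq_mul hj).trans (Nat.mul_le_mul_left _ (by lia))
  · have hcentral := sixteen_pow_le_centralBinom_sq_mul j.succ_pos
    rw [Nat.succ_eq_add_one, centralBinom_succ_eq_two_mul_choose] at hcentral
    have hpow : 4 * 4 ^ (2 * j + 1) = 16 ^ (j + 1) := by
      rw [← pow_succ', show 2 * j + 1 + 1 = 2 * (j + 1) by ring, pow_mul]; norm_num
    rw [show (2 * j + 1) / 2 = j by lia]
    nlinarith

theorem choose_half_mul_div_sq_le (m n : ℕ) :
    ((m.choose (m / 2) * n.choose (n / 2) : ℝ) / (m + n).choose ((m + n) / 2)) ^ 2 ≤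
      2 * (1 / (m + 1) + 1 / (n + 1)) := by
  have hm : (m.choose (m / 2) : ℝ) ^ 2 * (m + 1) ≤ 4 ^ m := mod_cast choose_half_sq_mul_le m
  have hn : (n.choose (n / 2) : ℝ) ^ 2 * (n + 1) ≤ 4 ^ n := mod_cast choose_half_sq_mul_le n
  have hmn : (4 : ℝ) ^ (m + n) ≤
      ((m + n).choose ((m + n) / 2) : ℝ) ^ 2 * (2 * (m + n + 1)) :=
    mod_cast four_pow_le_choose_half_sq_mul (m + n)
  have hpos : (0 : ℝ) < (m + n).choose ((m + n) / 2) :=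
    mod_cast Nat.choose_pos (Nat.div_le_self _ _)
  rw [one_div_add_one_div (by positivity) (by positivity), ← mul_div_assoc, div_pow,
    div_le_div_iff₀ (by positivity) (by positivity)]
  calc _ = ((m.choose (m / 2) : ℝ) ^ 2 * (m + 1)) * ((n.choose (n / 2) : ℝ) ^ 2 * (n + 1)) := by
        ring
    _ ≤ 4 ^ m * 4 ^ n := by gcongr
    _ ≤ ((m + n).choose ((m + n) / 2) : ℝ) ^ 2 * (2 * (m + n + 1)) := by rwa [← pow_add]
    _ ≤ ((m + n).choose ((m + n) / 2) : ℝ) ^ 2 * (2 * (m + 1 + (n + 1))) := by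
        gcongr ?_ * (2 * ?_)
        linarith
    _ = _ := by ring

theorem choose_succ_le_of_half_le {n r : ℕ} (h : n / 2 ≤ r) : n.choose (r + 1) ≤ n.choose r := by
  refine Nat.le_of_mul_le_mul_right ?_ r.succ_pos
  rw [Nat.choose_succ_right_eq]
  gcongr
  lia

theorem one_add_sum_max_choose_succ_sub (n r : ℕ) :
    1 + ∑ j ∈ range r, max 0 ((n.choose (j + 1) : ℝ) - n.choose j) =
      n.choose (min r (n / 2)) := by
  induction r with
  | zero => simp
  | succ r ih =>
    rw [sum_range_succ, ← add_assoc, ih]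
    rcases lt_or_ge r (n / 2) with h | h
    · have hle : (n.choose r : ℝ) ≤ n.choose (r + 1) :=
        mod_cast Nat.choose_le_succ_of_lt_half_left h
      rw [max_eq_right (sub_nonneg.2 hle), min_eq_left h.le, min_eq_left h]
      ring
    · have hle : (n.choose (r + 1) : ℝ) ≤ n.choose r := mod_cast choose_succ_le_of_half_le h
      rw [max_eq_left (sub_nonpos.2 hle), min_eq_right h, min_eq_right (h.trans r.le_succ),
        add_zero]

end MiddleBinomial

section Slices

theorem sum_antidiagonal_succ_choose_mul_sub_le {n : ℕ} {c : ℕ → ℝ} {K : ℝ} (hc₀ : ∀ j, 0 ≤ c j)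
    (hcK : ∀ j, c j ≤ K) (k : ℕ) :
    ∑ p ∈ antidiagonal (k + 1), n.choose p.1 * c p.2 -
        ∑ p ∈ antidiagonal k, n.choose p.1 * c p.2 ≤ K * n.choose (n / 2) := by
  have hK : 0 ≤ K := (hc₀ 0).trans (hcK 0)
  have hterm (p : ℕ × ℕ) : ((n.choose (p.1 + 1) : ℝ) - n.choose p.1) * c p.2 ≤
      K * max 0 ((n.choose (p.1 + 1) : ℝ) - n.choose p.1) :=
    calc _ ≤ max 0 ((n.choose (p.1 + 1) : ℝ) - n.choose p.1) * c p.2 :=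
          mul_le_mul_of_nonneg_right (le_max_right _ _) (hc₀ _)
      _ ≤ _ := by
          rw [mul_comm K]
          exact mul_le_mul_of_nonneg_left (hcK _) (le_max_left _ _)
  calc _ = c (k + 1) +
        ∑ p ∈ antidiagonal k, ((n.choose (p.1 + 1) : ℝ) - n.choose p.1) * c p.2 := by
        rw [Nat.sum_antidiagonal_succ, add_sub_assoc, ← sum_sub_distrib]
        simp only [Nat.choose_zero_right, Nat.cast_one, one_mul, sub_mul]
    _ ≤ K + ∑ p ∈ antidiagonal k, K * max 0 ((n.choose (p.1 + 1) : ℝ) - n.choose p.1) :=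
        add_le_add (hcK _) (sum_le_sum fun p _ ↦ hterm p)
    _ = K * n.choose (min (k + 1) (n / 2)) := by
        rw [← one_add_sum_max_choose_succ_sub, mul_add, mul_one, ← mul_sum,
          Nat.sum_antidiagonal_eq_sum_range_succ_mk]
    _ ≤ K * n.choose (n / 2) := by
        gcongr
        exact Nat.choose_le_middle _ _

variable {α : Type*} [DecidableEq α] {s t : Finset α}

theorem sum_powersetCard_union_inter {M : Type*} [AddCommMonoid M] (hst : Disjoint s t)
    (f : Finset α → M) (n : ℕ) :
    ∑ T ∈ powersetCard n (s ∪ t), f (T ∩ t) =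
      ∑ p ∈ antidiagonal n, (#s).choose p.1 • ∑ B ∈ powersetCard p.2 t, f B := by
  have hprod (p : ℕ × ℕ) : (#s).choose p.1 • ∑ B ∈ powersetCard p.2 t, f B =
      ∑ AB ∈ powersetCard p.1 s ×ˢ powersetCard p.2 t, f AB.2 := by
    simp only [sum_product, sum_const, card_powersetCard]
  have hunion {A B : Finset α} (hA : A ⊆ s) (hB : B ⊆ t) :
      (A ∪ B) ∩ s = A ∧ (A ∪ B) ∩ t = B := by
    rw [union_inter_distrib_right A B s, union_inter_distrib_right A B t, inter_eq_left.2 hA,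
      inter_eq_left.2 hB, disjoint_iff_inter_eq_empty.1 (hst.symm.mono_left hB),
      disjoint_iff_inter_eq_empty.1 (hst.mono_left hA), union_empty, empty_union]
    exact ⟨rfl, rfl⟩
  have hinter {T : Finset α} (hT : T ⊆ s ∪ t) : (T ∩ s) ∪ (T ∩ t) = T := by
    rw [← inter_union_distrib_left, inter_eq_left.2 hT]
  simp only [hprod]
  rw [sum_sigma']
  refine sum_nbij' (fun T ↦ ⟨(#(T ∩ s), #(T ∩ t)), (T ∩ s, T ∩ t)⟩) (fun q ↦ q.2.1 ∪ q.2.2)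
    ?_ ?_ ?_ ?_ fun _ _ ↦ rfl
  · intro T hT
    obtain ⟨hTst, rfl⟩ := mem_powersetCard.1 hT
    have hcard := card_union_of_disjoint (hst.mono T.inter_subset_right T.inter_subset_right)
    rw [hinter hTst] at hcard
    simp [hcard]
  · rintro ⟨⟨a, b⟩, A, B⟩ h
    simp only [mem_sigma, HasAntidiagonal.mem_antidiagonal, mem_product, mem_powersetCard] at h ⊢
    obtain ⟨hab, ⟨hA, rfl⟩, hB, rfl⟩ := h
    exact ⟨union_subset_union hA hB, (card_union_of_disjoint (hst.mono hA hB)).trans hab⟩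
  · intro T hT
    exact hinter (mem_powersetCard.1 hT).1
  · rintro ⟨⟨a, b⟩, A, B⟩ h
    simp only [mem_sigma, mem_product, mem_powersetCard] at h
    obtain ⟨-, ⟨hA, rfl⟩, hB, rfl⟩ := h
    obtain ⟨hs, ht⟩ := hunion hA hB
    simp only [hs, ht]

theorem sum_powersetCard_succ_sub_le (hst : Disjoint s t) {f : Finset α → ℝ}
    (hf : ∀ B, f B ∈ Set.Icc 0 1) (k : ℕ) :
    ∑ T ∈ powersetCard (k + 1) (s ∪ t), f (T ∩ t) - ∑ T ∈ powersetCard k (s ∪ t), f (T ∩ t) ≤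
      (#t).choose (#t / 2) * (#s).choose (#s / 2) := by
  simp only [sum_powersetCard_union_inter hst, nsmul_eq_mul]
  refine sum_antidiagonal_succ_choose_mul_sub_le (c := fun j ↦ ∑ B ∈ powersetCard j t, f B)
    (fun j ↦ sum_nonneg fun B _ ↦ (hf B).1) (fun j ↦ ?_) k
  calc ∑ B ∈ powersetCard j t, f B ≤ ∑ B ∈ powersetCard j t, 1 := sum_le_sum fun B _ ↦ (hf B).2
    _ = (#t).choose j := by simp
    _ ≤ (#t).choose (#t / 2) := mod_cast Nat.choose_le_middle _ _

end Slices

section RandomMask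

variable {α : Type*} [Fintype α] [DecidableEq α] {q : ℝ}

/-- The probability that the set of unmasked coordinates is exactly `S`, when each coordinate is
masked independently with probability `q`. -/
def keepProb (q : ℝ) (S : Finset α) : ℝ := (1 - q) ^ #S * q ^ #Sᶜ

theorem keepProb_nonneg (hq : q ∈ Set.Icc 0 1) (S : Finset α) : 0 ≤ keepProb q S :=
  mul_nonneg (pow_nonneg (sub_nonneg.2 hq.2) _) (pow_nonneg hq.1 _)

theorem keepProb_compl (q : ℝ) (S : Finset α) : keepProb q Sᶜ = keepProb (1 - q) S := by
  rw [keepProb, keepProb, compl_compl, sub_sub_cancel, mul_comm]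

theorem sum_keepProb (q : ℝ) : ∑ S : Finset α, keepProb q S = 1 := by
  simp only [keepProb, card_compl]
  rw [Fintype.sum_pow_mul_eq_add_pow, sub_add_cancel, one_pow]

theorem sum_keepProb_div_card_add_one_le (hq₀ : 0 ≤ q) (hq₁ : q < 1) :
    ∑ S : Finset α, keepProb q S * (1 / (#S + 1)) ≤ 1 / ((Fintype.card α + 1) * (1 - q)) := by
  set n := Fintype.card α
  have hq : 0 < 1 - q := sub_pos.2 hq₁
  have hgroup : ∑ S : Finset α, keepProb q S * (1 / (#S + 1)) =
      ∑ j ∈ range (n + 1), n.choose j * ((1 - q) ^ j * q ^ (n - j) * (1 / (j + 1))) := by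
    simpa only [keepProb, card_compl, powerset_univ, card_univ, nsmul_eq_mul] using
      sum_powerset_apply_card (fun j ↦ (1 - q) ^ j * q ^ (n - j) * (1 / ((j : ℝ) + 1)))
        (x := (univ : Finset α))
  have hshift (j : ℕ) : n.choose j * ((1 - q) ^ j * q ^ (n - j) * (1 / (j + 1))) *
      ((n + 1) * (1 - q)) =
      (1 - q) ^ (j + 1) * q ^ (n + 1 - (j + 1)) * (n + 1).choose (j + 1) := by
    have hchoose : ((n : ℝ) + 1) * n.choose j = (n + 1).choose (j + 1) * (j + 1) :=
      mod_cast Nat.add_one_mul_choose_eq n j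
    rw [Nat.add_sub_add_right]
    field_simp
    linear_combination (1 - q) ^ (j + 1) * q ^ (n - j) * hchoose
  have hbinom := add_pow (1 - q) q (n + 1)
  rw [sub_add_cancel, one_pow, sum_range_succ'] at hbinom
  rw [hgroup, le_div_iff₀ (mul_pos (by positivity) hq), sum_mul, sum_congr rfl fun j _ ↦ hshift j]
  refine (le_add_of_nonneg_right ?_).trans_eq hbinom.symm
  positivity

theorem sum_keepProb_inv_card_add_inv_card_compl_le (hq : q ∈ Set.Ioo 0 1) :
    ∑ S : Finset α, keepProb q S * (1 / (#S + 1) + 1 / (#Sᶜ + 1)) ≤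
      1 / ((Fintype.card α + 1) * (q * (1 - q))) := by
  have hkept := sum_keepProb_div_card_add_one_le (α := α) hq.1.le hq.2
  have hmasked := sum_keepProb_div_card_add_one_le (α := α) (q := 1 - q)
    (sub_nonneg.2 hq.2.le) (sub_lt_self 1 hq.1)
  simp only [← keepProb_compl] at hmasked
  rw [← compl_bijective.sum_comp] at hmasked
  simp only [compl_compl, sub_sub_cancel] at hmasked
  have hq' : 0 < 1 - q := sub_pos.2 hq.2
  have hq₀ := hq.1
  calc _ ≤ 1 / ((Fintype.card α + 1) * (1 - q)) + 1 / ((Fintype.card α + 1) * q) := by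
        simpa only [mul_add, sum_add_distrib] using add_le_add hkept hmasked
    _ = _ := by field_simp; ring

theorem sum_keepProb_mul_choose_half_div_le (hq : q ∈ Set.Ioo 0 1) :
    ∑ S : Finset α, keepProb q S * (((#S).choose (#S / 2) * (#Sᶜ).choose (#Sᶜ / 2) : ℝ) /
        (Fintype.card α).choose (Fintype.card α / 2)) ≤
      √(2 / ((Fintype.card α + 1) * (q * (1 - q)))) := by
  have hnonneg : ∀ S ∈ (univ : Finset (Finset α)), (0 : ℝ) ≤ keepProb q S := fun S _ ↦
    keepProb_nonneg (Set.Ioo_subset_Icc_self hq) S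
  refine Real.le_sqrt_of_sq_le <| (Real.pow_arith_mean_le_arith_mean_pow univ _ _ hnonneg
    (sum_keepProb q) (fun S _ ↦ by positivity) 2).trans ?_
  calc _ ≤ ∑ S : Finset α, keepProb q S * (2 * (1 / (#S + 1) + 1 / (#Sᶜ + 1))) := by
        refine sum_le_sum fun S hS ↦ mul_le_mul_of_nonneg_left ?_ (hnonneg S hS)
        simpa only [card_add_card_compl] using choose_half_mul_div_sq_le #S #Sᶜ
    _ = 2 * ∑ S : Finset α, keepProb q S * (1 / (#S + 1) + 1 / (#Sᶜ + 1)) := by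
        simp only [mul_left_comm, mul_sum]
    _ ≤ 2 * (1 / ((Fintype.card α + 1) * (q * (1 - q)))) :=
        mul_le_mul_of_nonneg_left (sum_keepProb_inv_card_add_inv_card_compl_le hq) two_pos.le
    _ = _ := mul_one_div _ _

end RandomMask

section Majority

variable {N : ℕ}

theorem sum_filter_wt_eq_sum_powersetCard {M : Type*} [AddCommMonoid M]
    (f : (Fin N → Bool) → M) (n : ℕ) :
    ∑ x with wt x = n, f x = ∑ T ∈ powersetCard n univ, f fun i ↦ decide (i ∈ T) := by
  refine sum_nbij' (fun x ↦ ({i | x i = true} : Finset (Fin N))) (fun T i ↦ decide (i ∈ T))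
    (fun x hx ↦ mem_powersetCard_univ.2 (mem_filter.1 hx).2)
    (fun T hT ↦ mem_filter.2 ⟨mem_univ _, ?_⟩) ?_ ?_ ?_
  · simpa [wt] using hT
  all_goals simp

theorem card_filter_wt_eq (N n : ℕ) : #{x : Fin N → Bool | wt x = n} = N.choose n := by
  rw [card_eq_sum_ones, sum_filter_wt_eq_sum_powersetCard, ← card_eq_sum_ones,
    card_powersetCard, card_univ, Fintype.card_fin]

theorem mask_decide_mem_inter (T S : Finset (Fin N)) :
    mask (fun i ↦ decide (i ∈ T ∩ S)) S = mask (fun i ↦ decide (i ∈ T)) S := by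
  funext i
  by_cases hi : i ∈ S <;> simp [mask, hi]

theorem sum_filter_wt_succ_sub_le {g : (Fin N → Option Bool) → ℝ}
    (hg : ∀ y, g y ∈ Set.Icc 0 1) (S : Finset (Fin N)) (k : ℕ) :
    ∑ x with wt x = k + 1, g (mask x S) - ∑ x with wt x = k, g (mask x S) ≤
      (#S).choose (#S / 2) * (#Sᶜ).choose (#Sᶜ / 2) := by
  simpa only [sum_filter_wt_eq_sum_powersetCard, mask_decide_mem_inter, union_comm,
    union_compl] using sum_powersetCard_succ_sub_le (disjoint_compl_left (a := S))
      (f := fun B ↦ g (mask (fun i ↦ decide (i ∈ B)) S)) (fun B ↦ hg _) k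

/-- The probability that the sampling algorithm with unread probability `q` computes the majority
of a uniformly random string with `k` or `k + 1` ones. The algorithm is encoded by `g`, with `g y`
the probability that it outputs `1` on the masked string `y`. -/
noncomputable def successProb (k : ℕ) (q : ℝ) (g : (Fin N → Option Bool) → ℝ) : ℝ :=
  1 / #{x : Fin N → Bool | wt x = k ∨ wt x = k + 1} *
    ∑ x : Fin N → Bool with wt x = k ∨ wt x = k + 1, ∑ S : Finset (Fin N),
      keepProb q S * if maj x = true then g (mask x S) else 1 - g (mask x S)

theorem disjoint_filter_wt (k : ℕ) :
    Disjoint ({x | wt x = k} : Finset (Fin N → Bool)) ({x | wt x = k + 1} : Finset _) :=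
  disjoint_filter.2 fun _ _ h ↦ by lia

theorem maj_eq_true_iff {k : ℕ} (hN : N = 2 * k + 1) (x : Fin N → Bool) :
    maj x = true ↔ k + 1 ≤ wt x := by
  rw [maj, decide_eq_true_iff]
  lia

theorem sum_middle_layers_eq {k : ℕ} (hN : N = 2 * k + 1) (f : (Fin N → Bool) → ℝ) :
    ∑ x with wt x = k ∨ wt x = k + 1, (if maj x = true then f x else 1 - f x) =
      N.choose k + (∑ x with wt x = k + 1, f x - ∑ x with wt x = k, f x) := by
  have hlower : ∑ x with wt x = k, (if maj x = true then f x else 1 - f x) =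
      N.choose k - ∑ x with wt x = k, f x := by
    rw [← card_filter_wt_eq, cast_card, ← sum_sub_distrib]
    refine sum_congr rfl fun x hx ↦ if_neg ?_
    rw [maj_eq_true_iff hN, (mem_filter.1 hx).2]
    exact k.lt_irrefl
  have hupper : ∑ x with wt x = k + 1, (if maj x = true then f x else 1 - f x) =
      ∑ x with wt x = k + 1, f x :=
    sum_congr rfl fun x hx ↦ if_pos ((maj_eq_true_iff hN x).2 (mem_filter.1 hx).2.ge)
  rw [filter_or, sum_union (disjoint_filter_wt k), hlower, hupper]
  ring

theorem card_middle_layers_eq {k : ℕ} (hN : N = 2 * k + 1) :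
    #{x : Fin N → Bool | wt x = k ∨ wt x = k + 1} = 2 * N.choose k := by
  subst hN
  rw [filter_or, card_union_of_disjoint (disjoint_filter_wt k), card_filter_wt_eq,
    card_filter_wt_eq, Nat.choose_symm_half, ← two_mul]

theorem successProb_eq {k : ℕ} (hN : N = 2 * k + 1) (q : ℝ) (g : (Fin N → Option Bool) → ℝ) :
    successProb k q g = 1 / 2 + (∑ S, keepProb q S *
      ((∑ x with wt x = k + 1, g (mask x S) - ∑ x with wt x = k, g (mask x S)) /
        N.choose k)) / 2 := by
  have hC : (N.choose k : ℝ) ≠ 0 := mod_cast (Nat.choose_pos (by lia)).ne'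
  rw [successProb, card_middle_layers_eq hN, sum_comm]
  simp only [← mul_sum, sum_middle_layers_eq hN, mul_add, sum_add_distrib, ← mul_div_assoc,
    ← sum_div]
  rw [← sum_mul, sum_keepProb]
  push_cast
  field_simp

theorem successProb_le {k : ℕ} (hN : N = 2 * k + 1) {q : ℝ} (hq : q ∈ Set.Ioo 0 1)
    {g : (Fin N → Option Bool) → ℝ} (hg : ∀ y, g y ∈ Set.Icc 0 1) :
    successProb k q g ≤ 1 / 2 + √(2 / ((N + 1) * (q * (1 - q)))) / 2 := by
  have hmoment := sum_keepProb_mul_choose_half_div_le (α := Fin N) hq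
  rw [Fintype.card_fin, show N / 2 = k by lia] at hmoment
  rw [successProb_eq hN]
  gcongr
  refine (sum_le_sum fun S _ ↦ ?_).trans hmoment
  gcongr
  exacts [keepProb_nonneg (Set.Ioo_subset_Icc_self hq) S, sum_filter_wt_succ_sub_le hg S k]

end Majority

theorem tendsto_mul_rpow_neg_mul_one_sub_atTop {a : ℝ} (ha₀ : 0 < a) (ha₁ : a < 1) :
    Tendsto (fun N : ℕ ↦ (N : ℝ) * ((N : ℝ) ^ (-a) * (1 - (N : ℝ) ^ (-a)))) atTop atTop := by
  have hmain : Tendsto (fun N : ℕ ↦ (N : ℝ) ^ (1 - a)) atTop atTop :=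
    (tendsto_rpow_atTop (sub_pos.2 ha₁)).comp tendsto_natCast_atTop_atTop
  have hfactor : Tendsto (fun N : ℕ ↦ 1 - (N : ℝ) ^ (-a)) atTop (𝓝 1) := by
    simpa using ((tendsto_rpow_neg_atTop ha₀).comp tendsto_natCast_atTop_atTop).const_sub 1
  refine (hmain.atTop_mul_pos one_pos hfactor).congr' ?_
  filter_upwards [eventually_gt_atTop 0] with N hN
  rw [sub_eq_add_neg, Real.rpow_add (mod_cast hN), Real.rpow_one, mul_assoc, sub_eq_add_neg]

theorem sampling_cannot_compute_majority_general {q : ℕ → ℝ}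
    (hq : Tendsto (fun N : ℕ ↦ N * (q N * (1 - q N))) atTop atTop) :
    ∀ η : ℝ, 0 < η → ∃ N₀ : ℕ, ∀ N k : ℕ, N = 2 * k + 1 → N₀ ≤ N →
      ∀ g : (Fin N → Option Bool) → ℝ, (∀ y, 0 ≤ g y ∧ g y ≤ 1) →
        successProb k (q N) g ≤ 1 / 2 + η := by
  intro η hη
  obtain ⟨N₀, hN₀⟩ := eventually_atTop.1 (hq.eventually_ge_atTop (1 / (2 * η ^ 2)))
  refine ⟨N₀, fun N k hN hle g hg ↦ ?_⟩
  have hvar : 1 / (2 * η ^ 2) ≤ N * (q N * (1 - q N)) := hN₀ N hle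
  have hpos : 0 < q N * (1 - q N) :=
    pos_of_mul_pos_right (lt_of_lt_of_le (by positivity) hvar) N.cast_nonneg
  have hqN : q N ∈ Set.Ioo 0 1 := by
    constructor <;> nlinarith [sq_nonneg (q N), sq_nonneg (1 - q N)]
  have hroot : √(2 / ((N + 1) * (q N * (1 - q N)))) ≤ 2 * η := by
    rw [Real.sqrt_le_left (by positivity), div_le_iff₀ (by positivity)]
    rw [div_le_iff₀ (by positivity)] at hvar
    nlinarith [mul_pos hpos (sq_pos_of_pos hη)]
  linarith [successProb_le hN hqN hg]

/-- For every `η > 0` there is `N₀` such that for all odd `N = 2k + 1 ≥ N₀`: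
for any sampling algorithm that independently replaces each coordinate by `⋆` with
probability `N^(-1/5)` (keeping it with probability `1 - N^(-1/5)`) and then outputs
a randomized bit `g y` depending only on the masked string `y`, if `X` is uniform on
the strings with exactly `k` or exactly `k + 1` ones, then
`Pr[A(X) = Majority(X)] ≤ 1/2 + η`. -/
theorem sampling_cannot_compute_majority :
    ∀ η : ℝ, 0 < η → ∃ N₀ : ℕ, ∀ N k : ℕ, N = 2 * k + 1 → N₀ ≤ N →
      ∀ g : (Fin N → Option Bool) → ℝ, (∀ y, 0 ≤ g y ∧ g y ≤ 1) →
        (1 / ((Finset.univ.filter fun x : Fin N → Bool =>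
              wt x = k ∨ wt x = k + 1).card : ℝ)) *
          ∑ x ∈ Finset.univ.filter fun x : Fin N → Bool => wt x = k ∨ wt x = k + 1,
            ∑ S : Finset (Fin N),
              (1 - (N : ℝ) ^ (-(1 / 5) : ℝ)) ^ S.card *
                ((N : ℝ) ^ (-(1 / 5) : ℝ)) ^ Sᶜ.card *
                (if maj x = true then g (mask x S) else 1 - g (mask x S)) ≤
        1 / 2 + η :=
  sampling_cannot_compute_majority_general
    (tendsto_mul_rpow_neg_mul_one_sub_atTop (by norm_num) (by norm_num))
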